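/- Let k ≥ 2 and n_1, …, n_k be positive integers, and let t be the number of indices i with n_i odd. If t is odd, then the signed total domination number of the complete k-partite graph K_{n_1,…,n_k} equals 3. -/

import Mathlib

open scoped Classical

/-- The signed total domination number of a finite simple graph `G`: the minimum weight of a
function `f : V → {−1, 1}` such that `f(N(v)) ≥ 1` for every vertex `v`. -/
noncomputable def signedTotalDomNum {V : Type*} [Fintype V] (G : SimpleGraph V) : ℤ :=
  sInf {w : ℤ | ∃ f : V → ℤ, (∀ v, f v = 1 ∨ f v = -1) ∧
    (∀ v, 1 ≤ ∑ u ∈ G.neighborFinset v, f u) ∧ w = ∑ v, f v}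

/-!
In a complete multipartite graph a sign function is dominating exactly when its sum over each part
is less than its total `w`. If `w ≤ 1`, then no part has a positive sum, so `w` is at most the sum
over any one part, which is absurd; hence `w ≥ 2`. As `w` has the parity of the number of vertices,
`w ≥ 3` when that number is odd. Conversely, the possible sums of signs over a part of size `m` are
the integers of absolute value at most `m` and of the parity of `m`. The total `3` is reached with
sums `±1` on the odd parts and `0` on the even parts if there are at least three odd parts, and with
sums `1` and `2` on the odd part and some even part if there is only one.
-/

/-- Signed total dominating functions, encoded as integer-valued functions with values `±1`; the
minimum of their weights `∑ v, f v` is `signedTotalDomNum G`. -/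
def IsSignedTotalDominating {V : Type*} [Fintype V] (G : SimpleGraph V) (f : V → ℤ) : Prop :=
  (∀ v, f v = 1 ∨ f v = -1) ∧ ∀ v, 1 ≤ ∑ u ∈ G.neighborFinset v, f u

theorem signedTotalDomNum_eq_of_forall_le {V : Type*} [Fintype V] {G : SimpleGraph V} {f : V → ℤ}
    (hf : IsSignedTotalDominating G f)
    (hmin : ∀ g, IsSignedTotalDominating G g → ∑ v, f v ≤ ∑ v, g v) :
    signedTotalDomNum G = ∑ v, f v := by
  refine IsLeast.csInf_eq ⟨⟨f, hf.1, hf.2, rfl⟩, ?_⟩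
  rintro _ ⟨g, hsign, hdom, rfl⟩
  exact hmin g ⟨hsign, hdom⟩

section SignSums

variable {α : Type*} {t : Finset α}

theorem odd_sum_iff_odd_card_of_forall_odd {f : α → ℤ} (hf : ∀ a ∈ t, Odd (f a)) :
    Odd (∑ a ∈ t, f a) ↔ Odd t.card := by
  have heven : Even (∑ a ∈ t, f a - t.card) := by
    simpa using Finset.even_sum (fun a => f a - 1) fun a ha => (hf a ha).sub_odd odd_one
  rw [← Int.odd_coe_nat, ← Int.not_even_iff_odd, ← Int.not_even_iff_odd, Int.even_sub.mp heven]

theorem exists_sign_sum_eq {s : ℤ} (habs : |s| ≤ t.card) (heven : Even (s + t.card)) :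
    ∃ f : α → ℤ, (∀ a, f a = 1 ∨ f a = -1) ∧ ∑ a ∈ t, f a = s := by
  obtain ⟨p, hp⟩ := heven
  obtain ⟨hlow, hupp⟩ := abs_le.mp habs
  lift p to ℕ using by omega
  obtain ⟨A, hAt, hA⟩ := Finset.exists_subset_card_eq (show p ≤ t.card by omega)
  refine ⟨fun a => if a ∈ A then 1 else -1, fun a => ite_eq_or_eq _ _ _, ?_⟩
  have hcard : (t \ A).card + p = t.card := hA ▸ Finset.card_sdiff_add_card_eq_card hAt
  rw [← Finset.sum_sdiff hAt, Finset.sum_congr rfl fun a ha => if_neg (Finset.mem_sdiff.mp ha).2,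
    Finset.sum_congr rfl fun a ha => if_pos ha]
  simp only [Finset.sum_const, nsmul_eq_mul, hA]
  omega

end SignSums

section CompleteMultipartite

open SimpleGraph

variable {ι : Type*} [Fintype ι] {V : ι → Type*} [∀ i, Fintype (V i)]

theorem sum_neighborFinset_completeMultipartiteGraph {M : Type*} [AddCommGroup M]
    (f : (Σ i, V i) → M) (v : Σ i, V i) [Fintype ((completeMultipartiteGraph V).neighborSet v)] :
    ∑ u ∈ (completeMultipartiteGraph V).neighborFinset v, f u =
      ∑ u, f u - ∑ x, f ⟨v.1, x⟩ := by
  have hnbhd : (completeMultipartiteGraph V).neighborFinset v =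
      Finset.univ.filter fun u => ¬ v.1 = u.1 := by
    ext u
    simp
  have hpart : ∑ u : (Σ i, V i) with v.1 = u.1, f u = ∑ x, f ⟨v.1, x⟩ := by
    rw [Finset.sum_filter, Fintype.sum_sigma,
      Fintype.sum_eq_single v.1 fun i hi => by simp [hi.symm]]
    simp
  rw [hnbhd, ← hpart, eq_sub_iff_add_eq', Finset.sum_filter_add_sum_filter_not]

theorem isSignedTotalDominating_completeMultipartiteGraph_iff {f : (Σ i, V i) → ℤ} :
    IsSignedTotalDominating (completeMultipartiteGraph V) f ↔
      (∀ v, f v = 1 ∨ f v = -1) ∧ ∀ v : Σ i, V i, ∑ x, f ⟨v.1, x⟩ < ∑ u, f u := by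
  simp only [IsSignedTotalDominating, sum_neighborFinset_completeMultipartiteGraph,
    Order.one_le_iff_pos, sub_pos]

theorem IsSignedTotalDominating.two_le_sum_completeMultipartiteGraph
    [Nonempty (Σ i, V i)] {f : (Σ i, V i) → ℤ}
    (hf : IsSignedTotalDominating (completeMultipartiteGraph V) f) : 2 ≤ ∑ v, f v := by
  obtain ⟨-, hlt⟩ := isSignedTotalDominating_completeMultipartiteGraph_iff.mp hf
  by_contra! htotal
  have hpart (i : ι) : ∑ x, f ⟨i, x⟩ ≤ 0 := by
    rcases isEmpty_or_nonempty (V i) with _ | ⟨⟨x⟩⟩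
    · simp
    · have : ∑ y, f ⟨i, y⟩ < ∑ u, f u := hlt ⟨i, x⟩
      omega
  obtain ⟨v⟩ := ‹Nonempty (Σ i, V i)›
  refine (hlt v).not_ge ?_
  calc ∑ u, f u = ∑ x, f ⟨v.1, x⟩ + ∑ i ∈ Finset.univ.erase v.1, ∑ x, f ⟨i, x⟩ := by
        rw [Fintype.sum_sigma,
          Finset.add_sum_erase _ (fun i => ∑ x, f ⟨i, x⟩) (Finset.mem_univ v.1)]
    _ ≤ ∑ x, f ⟨v.1, x⟩ := add_le_of_nonpos_right (Finset.sum_nonpos fun i _ => hpart i)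

theorem IsSignedTotalDominating.three_le_sum_completeMultipartiteGraph
    (hodd : Odd (Fintype.card (Σ i, V i))) {f : (Σ i, V i) → ℤ}
    (hf : IsSignedTotalDominating (completeMultipartiteGraph V) f) : 3 ≤ ∑ v, f v := by
  have : Nonempty (Σ i, V i) := Fintype.card_pos_iff.mp hodd.pos
  have hsum : Odd (∑ v, f v) := (odd_sum_iff_odd_card_of_forall_odd fun v _ => by
    rcases hf.1 v with h | h <;> simp [h]).mpr hodd
  have htwo : ∑ v, f v ≠ 2 := fun h => Int.not_even_iff_odd.mpr (h ▸ hsum) even_two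
  exact hf.two_le_sum_completeMultipartiteGraph.lt_of_ne' htwo

theorem exists_isSignedTotalDominating_completeMultipartiteGraph {s : ι → ℤ}
    (habs : ∀ i, |s i| ≤ Fintype.card (V i)) (heven : ∀ i, Even (s i + Fintype.card (V i)))
    (hlt : ∀ i, s i < ∑ j, s j) :
    ∃ f, IsSignedTotalDominating (completeMultipartiteGraph V) f ∧ ∑ v, f v = ∑ i, s i := by
  choose f hsign hpart using fun i => exists_sign_sum_eq (habs i) (heven i)
  have htotal : ∑ v : (Σ i, V i), f v.1 v.2 = ∑ i, s i := by
    simp only [Fintype.sum_sigma, hpart]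
  refine ⟨fun v => f v.1 v.2, isSignedTotalDominating_completeMultipartiteGraph_iff.mpr
    ⟨fun v => hsign v.1 v.2, fun v => ?_⟩, htotal⟩
  simpa only [hpart, htotal] using hlt v.1

theorem exists_isSignedTotalDominating_sum_eq_three_of_card_odd_eq_one [Nontrivial ι]
    [∀ i, Nonempty (V i)]
    (hcard : (Finset.univ.filter fun i => Odd (Fintype.card (V i))).card = 1) :
    ∃ f, IsSignedTotalDominating (completeMultipartiteGraph V) f ∧ ∑ v, f v = 3 := by
  obtain ⟨a, ha⟩ := Finset.card_eq_one.mp hcard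
  obtain ⟨b, hba⟩ := exists_ne a
  have hodd (i : ι) : Odd (Fintype.card (V i)) ↔ i = a := by simpa using Finset.ext_iff.mp ha i
  have hcard_b : 2 ≤ Fintype.card (V b) := by
    have hpos : 0 < Fintype.card (V b) := Fintype.card_pos
    have heven : Even (Fintype.card (V b)) := Nat.not_odd_iff_even.mp (mt (hodd b).mp hba)
    grind
  let s : ι → ℤ := fun i => (if i = a then 1 else 0) + (if i = b then 2 else 0)
  have hsum : ∑ i, s i = 3 := by simp [s, Finset.sum_add_distrib]
  have habs (i : ι) : |s i| ≤ Fintype.card (V i) := by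
    have hcard_a : 0 < Fintype.card (V a) := Fintype.card_pos
    grind
  have heven (i : ι) : Even (s i + Fintype.card (V i)) := by
    have := hodd i
    grind
  have hlt (i : ι) : s i < ∑ j, s j := by grind
  exact hsum ▸ exists_isSignedTotalDominating_completeMultipartiteGraph habs heven hlt

theorem exists_isSignedTotalDominating_sum_eq_three_of_three_le_card_odd
    (hodd : Odd (Finset.univ.filter fun i => Odd (Fintype.card (V i))).card)
    (hcard : 3 ≤ (Finset.univ.filter fun i => Odd (Fintype.card (V i))).card) :
    ∃ f, IsSignedTotalDominating (completeMultipartiteGraph V) f ∧ ∑ v, f v = 3 := by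
  obtain ⟨ε, hsign, hε⟩ := exists_sign_sum_eq (s := 3) (mod_cast hcard)
    (Odd.add_odd (by decide) (mod_cast hodd))
  let s : ι → ℤ := fun i => if Odd (Fintype.card (V i)) then ε i else 0
  have hsum : ∑ i, s i = 3 := by rw [← hε, Finset.sum_filter]
  have habs (i : ι) : |s i| ≤ Fintype.card (V i) := by grind
  have heven (i : ι) : Even (s i + Fintype.card (V i)) := by grind
  have hlt (i : ι) : s i < ∑ j, s j := by grind
  exact hsum ▸ exists_isSignedTotalDominating_completeMultipartiteGraph habs heven hlt

theorem signedTotalDomNum_eq_three_of_odd_t_general [Nontrivial ι] [∀ i, Nonempty (V i)]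
    (hodd : Odd (Finset.univ.filter fun i => Odd (Fintype.card (V i))).card) :
    signedTotalDomNum (completeMultipartiteGraph V) = 3 := by
  have horder : Odd (Fintype.card (Σ i, V i)) := by
    rwa [Fintype.card_sigma, Finset.odd_sum_iff_odd_card_odd]
  obtain ⟨f, hf, hsum⟩ : ∃ f, IsSignedTotalDominating (completeMultipartiteGraph V) f ∧
      ∑ v, f v = 3 := by
    obtain hone | hthree : (Finset.univ.filter fun i => Odd (Fintype.card (V i))).card = 1 ∨
        3 ≤ (Finset.univ.filter fun i => Odd (Fintype.card (V i))).card := by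
      obtain ⟨c, hc⟩ := hodd
      omega
    · exact exists_isSignedTotalDominating_sum_eq_three_of_card_odd_eq_one hone
    · exact exists_isSignedTotalDominating_sum_eq_three_of_three_le_card_odd hodd hthree
  rw [← hsum]
  exact signedTotalDomNum_eq_of_forall_le hf fun g hg =>
    hsum ▸ hg.three_le_sum_completeMultipartiteGraph horder

end CompleteMultipartite

theorem signedTotalDomNum_eq_three_of_odd_t
    (k : ℕ) (hk : 2 ≤ k) (n : Fin k → ℕ) (hn : ∀ i, 0 < n i)
    (t : ℕ) (ht : t = (Finset.univ.filter fun i => Odd (n i)).card) (htodd : Odd t) :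
    signedTotalDomNum (SimpleGraph.completeMultipartiteGraph fun i : Fin k => Fin (n i)) = 3 := by
  have : Nontrivial (Fin k) := Fin.nontrivial_iff_two_le.mpr hk
  have (i : Fin k) : Nonempty (Fin (n i)) := Fin.pos_iff_nonempty.mp (hn i)
  exact signedTotalDomNum_eq_three_of_odd_t_general (by simpa only [Fintype.card_fin, ← ht])
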